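/- Let G be a finite undirected unweighted simple graph, let c be a vertex of G, and let r1 < r2 < r be positive integers with 0 < r1. Then there exists an integer d with r1 < d ≤ r2 such that |ball_G^=(c, d) ∪ ball_G^=(c, d+1)| ≤ 2 · |ball_G(c, r)| / (r2 − r1). -/

import Mathlib

/-- The ball of radius `r` around `c` in the graph `G`. -/
def gball {V : Type} (G : SimpleGraph V) (c : V) (r : ℕ) : Set V :=
  {v | G.edist c v ≤ (r : ℕ∞)}

/-- The boundary (sphere) of radius `r` around `c` in the graph `G`. -/
def gsphere {V : Type} (G : SimpleGraph V) (c : V) (r : ℕ) : Set V :=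
  {v | G.edist c v = (r : ℕ∞)}

/-!
The spheres around `c` are disjoint, so over the `r2 - r1` radii `d` in `(r1, r2]` the sizes of
`gsphere G c d` sum to at most `|gball G c r|`, and so do those of `gsphere G c (d + 1)`. The
average size of the union of the two is therefore at most `2 * |gball G c r| / (r2 - r1)`, and
some `d` does no worse than average.
-/

open Function
open scoped BigOperators

theorem sum_ncard_le_ncard_of_pairwiseDisjoint {ι α : Type*} {s : Finset ι} {A : ι → Set α}
    {B : Set α} (hB : B.Finite) (hsub : ∀ i ∈ s, A i ⊆ B)
    (hdisj : (s : Set ι).PairwiseDisjoint A) :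
    ∑ i ∈ s, (A i).ncard ≤ B.ncard := by
  calc ∑ i ∈ s, (A i).ncard
      = (⋃ i ∈ (s : Set ι), A i).ncard := by
        rw [s.finite_toSet.ncard_biUnion (fun i hi => hB.subset (hsub i hi)) hdisj,
          finsum_mem_coe_finset]
    _ ≤ B.ncard := Set.ncard_le_ncard (Set.iUnion₂_subset hsub) hB

section Spheres

variable {V : Type} (G : SimpleGraph V) (c : V)

theorem gsphere_subset_gball {d r : ℕ} (hdr : d ≤ r) : gsphere G c d ⊆ gball G c r :=
  fun _ hv => (le_of_eq hv).trans (Nat.cast_le.2 hdr)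

theorem pairwise_disjoint_gsphere : Pairwise (Disjoint on gsphere G c) :=
  fun _ _ hne => Set.disjoint_left.2 fun _ h₁ h₂ => hne (Nat.cast_injective (h₁.symm.trans h₂))

variable {G c}

theorem sum_ncard_gsphere_le_ncard_gball {ι : Type*} {s : Finset ι} {ρ : ι → ℕ} {r : ℕ}
    (hfin : (gball G c r).Finite) (hρ : Set.InjOn ρ s) (hle : ∀ i ∈ s, ρ i ≤ r) :
    ∑ i ∈ s, (gsphere G c (ρ i)).ncard ≤ (gball G c r).ncard :=
  sum_ncard_le_ncard_of_pairwiseDisjoint hfin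
    (fun i hi => gsphere_subset_gball G c (hle i hi))
    (fun _ hi _ hj hne => pairwise_disjoint_gsphere G c (hρ.ne hi hj hne))

theorem sum_ncard_gsphere_union_succ_le {s : Finset ℕ} {r : ℕ}
    (hfin : (gball G c r).Finite) (hlt : ∀ d ∈ s, d < r) :
    ∑ d ∈ s, (gsphere G c d ∪ gsphere G c (d + 1)).ncard ≤ 2 * (gball G c r).ncard := by
  calc ∑ d ∈ s, (gsphere G c d ∪ gsphere G c (d + 1)).ncard
      ≤ ∑ d ∈ s, ((gsphere G c d).ncard + (gsphere G c (d + 1)).ncard) :=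
        Finset.sum_le_sum fun _ _ => Set.ncard_union_le _ _
    _ = ∑ d ∈ s, (gsphere G c d).ncard + ∑ d ∈ s, (gsphere G c (d + 1)).ncard :=
        Finset.sum_add_distrib
    _ ≤ (gball G c r).ncard + (gball G c r).ncard :=
        add_le_add
          (sum_ncard_gsphere_le_ncard_gball hfin injective_id.injOn
            fun d hd => (hlt d hd).le)
          (sum_ncard_gsphere_le_ncard_gball hfin Nat.succ_injective.injOn hlt)
    _ = 2 * (gball G c r).ncard := (two_mul _).symm

end Spheres

theorem bottleneck_general {V : Type} (G : SimpleGraph V) (c : V) {r1 r2 r : ℕ}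
    (hfin : (gball G c r).Finite) (h12 : r1 < r2) (h2r : r2 < r) :
    ∃ d : ℕ, r1 < d ∧ d ≤ r2 ∧
      ((gsphere G c d ∪ gsphere G c (d + 1)).ncard : ℝ) ≤
        2 * ((gball G c r).ncard : ℝ) / ((r2 : ℝ) - (r1 : ℝ)) := by
  have hsum : ∑ d ∈ Finset.Ioc r1 r2, ((gsphere G c d ∪ gsphere G c (d + 1)).ncard : ℝ) ≤
      2 * (gball G c r).ncard := by
    exact_mod_cast sum_ncard_gsphere_union_succ_le hfin
      fun d hd => (Finset.mem_Ioc.1 hd).2.trans_lt h2r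
  have hcard : ((Finset.Ioc r1 r2).card : ℝ) = r2 - r1 := by
    rw [Nat.card_Ioc, Nat.cast_sub h12.le]
  have havg : 𝔼 d ∈ Finset.Ioc r1 r2, ((gsphere G c d ∪ gsphere G c (d + 1)).ncard : ℝ) ≤
      2 * (gball G c r).ncard / (r2 - r1) := by
    rw [Finset.expect_eq_sum_div_card, ← hcard]
    gcongr
  obtain ⟨d, hd, hle⟩ := Finset.exists_le_of_expect_le (Finset.nonempty_Ioc.2 h12) havg
  exact ⟨d, (Finset.mem_Ioc.1 hd).1, (Finset.mem_Ioc.1 hd).2, hle⟩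

/-- **Bottleneck lemma.** For any graph `G`, vertex `c`, and positive integers
`r1 < r2 < r`, there is an integer `d` with `r1 < d ≤ r2` such that
`|ball^=(c, d) ∪ ball^=(c, d+1)| ≤ 2 · |ball(c, r)| / (r2 − r1)`. -/
theorem bottleneck (V : Type) [Fintype V] (G : SimpleGraph V) (c : V)
    (r1 r2 r : ℕ) (h0 : 0 < r1) (h12 : r1 < r2) (h2r : r2 < r) :
    ∃ d : ℕ, r1 < d ∧ d ≤ r2 ∧
      ((gsphere G c d ∪ gsphere G c (d + 1)).ncard : ℝ) ≤
        2 * ((gball G c r).ncard : ℝ) / ((r2 : ℝ) - (r1 : ℝ)) :=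
  bottleneck_general G c (Set.toFinite _) h12 h2r
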